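/- arXiv:1312.4377 — 2 statements merged into one kernel-verified Lean document; each statement's English description precedes it below -/
import Mathlib

section
/- Let f : [0,∞) → [0,∞) be amenable. Then f is ultrametric-metric-preserving if and only if for all 0 ≤ a ≤ b, f(a) ≤ 2·f(b). -/
def IsMetric {X : Type*} (d : X → X → ℝ) : Prop :=
  (∀ x y, 0 ≤ d x y) ∧ (∀ x y, d x y = 0 ↔ x = y) ∧
  (∀ x y, d x y = d y x) ∧ (∀ x y z, d x y ≤ d x z + d z y)

def IsUltrametric {X : Type*} (d : X → X → ℝ) : Prop :=
  (∀ x y, 0 ≤ d x y) ∧ (∀ x y, d x y = 0 ↔ x = y) ∧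
  (∀ x y, d x y = d y x) ∧ (∀ x y z, d x y ≤ max (d x z) (d z y))

def MetricPreserving (f : ℝ → ℝ) : Prop :=
  ∀ (X : Type) (d : X → X → ℝ), IsMetric d → IsMetric fun x y => f (d x y)

def UltrametricPreserving (f : ℝ → ℝ) : Prop :=
  ∀ (X : Type) (d : X → X → ℝ), IsUltrametric d → IsUltrametric fun x y => f (d x y)

def MetricUltrametricPreserving (f : ℝ → ℝ) : Prop :=
  ∀ (X : Type) (d : X → X → ℝ), IsMetric d → IsUltrametric fun x y => f (d x y)

def UltrametricMetricPreserving (f : ℝ → ℝ) : Prop :=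
  ∀ (X : Type) (d : X → X → ℝ), IsUltrametric d → IsMetric fun x y => f (d x y)

def Amenable (f : ℝ → ℝ) : Prop :=
  ∀ x, 0 ≤ x → (f x = 0 ↔ x = 0)

/-!
In an ultrametric space the two longest sides of every triangle are equal. If `d x z ≠ d z y`,
then `d x y` is the larger of the two and the triangle inequality for `f ∘ d` is immediate, as the
case `a = b` of `f a ≤ 2 * f b` makes `f` nonnegative; if they agree, `d x y` is at most their
common value and `f a ≤ 2 * f b` is exactly what is needed.
Conversely, in `ℝ≥0` with the ultrametric `max x y` (for `x ≠ y`), the points `0`, `a`, `b` with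
`a < b` form a triangle with base `a` and both legs `b`.
-/

open scoped NNReal

section UltrametricComp

variable {X : Type*} {d : X → X → ℝ} {f : ℝ → ℝ}

theorem IsUltrametric.eq_max_of_ne (hd : IsUltrametric d) {x y z : X} (hne : d x z ≠ d z y) :
    d x y = max (d x z) (d z y) := by
  obtain ⟨-, -, symm, ultra⟩ := hd
  refine (ultra x y z).antisymm ?_
  rcases hne.lt_or_gt with hlt | hlt
  · have hzy : d z y ≤ max (d x z) (d x y) := symm z x ▸ ultra z y x
    exact (max_le hlt.le le_rfl).trans ((le_max_iff.1 hzy).resolve_left hlt.not_ge)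
  · have hxz : d x z ≤ max (d x y) (d z y) := symm y z ▸ ultra x z y
    exact (max_le le_rfl hlt.le).trans ((le_max_iff.1 hxz).resolve_right hlt.not_ge)

theorem nonneg_of_le_two_mul (hf : ∀ a b : ℝ, 0 ≤ a → a ≤ b → f a ≤ 2 * f b) {a : ℝ}
    (ha : 0 ≤ a) : 0 ≤ f a := by
  linarith [hf a a ha le_rfl]

theorem IsUltrametric.comp_le_add (hd : IsUltrametric d)
    (hf : ∀ a b : ℝ, 0 ≤ a → a ≤ b → f a ≤ 2 * f b) (x y z : X) :
    f (d x y) ≤ f (d x z) + f (d z y) := by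
  by_cases heq : d x z = d z y
  · have hle : d x y ≤ d z y := by simpa only [heq, max_self] using hd.2.2.2 x y z
    calc
      f (d x y) ≤ 2 * f (d z y) := hf _ _ (hd.1 x y) hle
      _ = f (d x z) + f (d z y) := by rw [heq, two_mul]
  · have hxz := nonneg_of_le_two_mul hf (hd.1 x z)
    have hzy := nonneg_of_le_two_mul hf (hd.1 z y)
    rw [hd.eq_max_of_ne heq]
    rcases max_choice (d x z) (d z y) with hmax | hmax <;> rw [hmax]
    · exact le_add_of_nonneg_right hzy
    · exact le_add_of_nonneg_left hxz

theorem IsUltrametric.isMetric_comp (hd : IsUltrametric d) (hamen : Amenable f)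
    (hf : ∀ a b : ℝ, 0 ≤ a → a ≤ b → f a ≤ 2 * f b) :
    IsMetric fun x y => f (d x y) :=
  ⟨fun x y => nonneg_of_le_two_mul hf (hd.1 x y),
    fun x y => (hamen _ (hd.1 x y)).trans (hd.2.1 x y),
    fun x y => congrArg f (hd.2.2.1 x y),
    hd.comp_le_add hf⟩

end UltrametricComp

/-- The max-ultrametric on the half-line: distinct points `x` and `y` are at distance `max x y`.
It is the test space for ultrametric-metric-preserving functions; every `x ≥ 0` is a distance in
it, namely the one from `0` to `x`. -/
noncomputable def maxDist (x y : ℝ≥0) : ℝ :=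
  if x = y then 0 else max x y

theorem maxDist_self (x : ℝ≥0) : maxDist x x = 0 :=
  if_pos rfl

theorem maxDist_of_ne {x y : ℝ≥0} (h : x ≠ y) : maxDist x y = max (x : ℝ) y :=
  if_neg h

theorem maxDist_comm (x y : ℝ≥0) : maxDist x y = maxDist y x := by
  simp only [maxDist, eq_comm, max_comm]

theorem maxDist_of_lt {x y : ℝ≥0} (h : x < y) : maxDist x y = y := by
  rw [maxDist_of_ne h.ne, max_eq_right (NNReal.coe_le_coe.2 h.le)]

theorem maxDist_zero_left (x : ℝ≥0) : maxDist 0 x = x := by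
  rcases eq_zero_or_pos x with rfl | hx
  · exact maxDist_self 0
  · exact maxDist_of_lt hx

theorem maxDist_nonneg (x y : ℝ≥0) : 0 ≤ maxDist x y := by
  unfold maxDist
  positivity

theorem maxDist_eq_zero_iff {x y : ℝ≥0} : maxDist x y = 0 ↔ x = y := by
  refine ⟨fun h => ?_, fun h => h ▸ maxDist_self x⟩
  by_contra hne
  rw [maxDist_of_ne hne] at h
  have hx : x = 0 := by exact_mod_cast ((le_max_left (x : ℝ) y).trans_eq h).antisymm x.coe_nonneg
  have hy : y = 0 := by exact_mod_cast ((le_max_right (x : ℝ) y).trans_eq h).antisymm y.coe_nonneg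
  exact hne (hx.trans hy.symm)

theorem maxDist_le_max (x y z : ℝ≥0) : maxDist x y ≤ max (maxDist x z) (maxDist z y) := by
  rcases eq_or_ne x y with rfl | hxy
  · exact maxDist_self x ▸ le_max_of_le_left (maxDist_nonneg x z)
  rcases eq_or_ne x z with rfl | hxz
  · exact le_max_right _ _
  rcases eq_or_ne z y with rfl | hzy
  · exact le_max_left _ _
  rw [maxDist_of_ne hxy, maxDist_of_ne hxz, maxDist_of_ne hzy]
  exact max_le_max (le_max_left _ _) (le_max_right _ _)

theorem isUltrametric_maxDist : IsUltrametric maxDist :=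
  ⟨maxDist_nonneg, fun _ _ => maxDist_eq_zero_iff, maxDist_comm, maxDist_le_max⟩

section TestSpace

variable {f : ℝ → ℝ}

theorem amenable_of_isMetric_comp_maxDist (h : IsMetric fun x y => f (maxDist x y)) :
    Amenable f := by
  intro x hx
  lift x to ℝ≥0 using hx
  simpa only [maxDist_zero_left, eq_comm, NNReal.coe_eq_zero] using h.2.1 0 x

theorem le_two_mul_of_isMetric_comp_maxDist (h : IsMetric fun x y => f (maxDist x y))
    {a b : ℝ} (ha : 0 ≤ a) (hab : a ≤ b) : f a ≤ 2 * f b := by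
  lift a to ℝ≥0 using ha
  lift b to ℝ≥0 using a.coe_nonneg.trans hab
  obtain ⟨nonneg, -, -, triangle⟩ := h
  rcases (NNReal.coe_le_coe.1 hab).eq_or_lt with rfl | hlt
  · have ha : 0 ≤ f a := by simpa only [maxDist_zero_left] using nonneg 0 a
    exact le_mul_of_one_le_left ha one_le_two
  · calc
      f a = f (maxDist 0 a) := by rw [maxDist_zero_left]
      _ ≤ f (maxDist 0 b) + f (maxDist b a) := triangle 0 a b
      _ = 2 * f b := by rw [maxDist_zero_left, maxDist_comm, maxDist_of_lt hlt, two_mul]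

end TestSpace

theorem stmt15_general (f : ℝ → ℝ) :
    UltrametricMetricPreserving f ↔
      Amenable f ∧ ∀ a b : ℝ, 0 ≤ a → a ≤ b → f a ≤ 2 * f b := by
  refine ⟨fun hf => ?_, fun ⟨hamen, hle⟩ _ _ hd => hd.isMetric_comp hamen hle⟩
  have hmetric := hf ℝ≥0 maxDist isUltrametric_maxDist
  exact ⟨amenable_of_isMetric_comp_maxDist hmetric,
    fun _ _ => le_two_mul_of_isMetric_comp_maxDist hmetric⟩

theorem stmt15 (f : ℝ → ℝ) (hf : ∀ x, 0 ≤ x → 0 ≤ f x)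
    (hamen : Amenable f) :
    UltrametricMetricPreserving f ↔
      ∀ a b : ℝ, 0 ≤ a → a ≤ b → f a ≤ 2 * f b :=
  (stmt15_general f).trans (and_iff_right hamen)
end

section
/- Let f : [0,∞) → [0,∞) be metric-preserving. Then the following are equivalent: (1) f is continuous on [0,∞); (2) f is continuous at 0; (3) for every ε > 0 there exists x > 0 such that f(x) < ε; (4) f is uniformly continuous on [0,∞). -/
/-!
A metric-preserving `f` maps the side lengths of a triangle to the side lengths of a triangle.
The sides `x, y, |x - y|` give `|f x - f y| ≤ f |x - y|`, and the isosceles triangle with sides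
`a, b, b`, where `a ≤ 2 * b`, gives `f a ≤ 2 * f b`. Hence one small value `f b` with `b > 0` bounds
`f` on all of `[0, 2 * b]`, and so controls the oscillation of `f` at scale `2 * b`, uniformly on
`[0, ∞)`.
-/

open Set Topology

theorem exists_gt_apply_lt_of_continuousWithinAt_Ici {α β : Type*} [TopologicalSpace α]
    [Preorder α] [TopologicalSpace β] [LinearOrder β] [ClosedIciTopology β] {f : α → β} {a : α}
    [(𝓝[>] a).NeBot] (hf : ContinuousWithinAt f (Ici a) a) {b : β} (hb : f a < b) :
    ∃ x, a < x ∧ f x < b :=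
  have hlt : ∀ᶠ x in 𝓝[>] a, f x < b := (hf.mono Ioi_subset_Ici_self).eventually_lt_const hb
  (eventually_mem_nhdsWithin.and hlt).exists

/-- A triangle triplet: three reals each of which is at most the sum of the other two, that is, the
side lengths of a possibly degenerate triangle. Nonnegativity of `a`, `b`, `c` follows. -/
def IsTriangleTriplet (a b c : ℝ) : Prop :=
  a ≤ b + c ∧ b ≤ a + c ∧ c ≤ a + b

/-- The functions that send triangle triplets to triangle triplets. Applied to the distances
between three points, this is the triangle inequality for `fun x y => f (d x y)`. -/
def PreservesTriangleTriplets (f : ℝ → ℝ) : Prop :=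
  ∀ ⦃a b c : ℝ⦄, IsTriangleTriplet a b c → IsTriangleTriplet (f a) (f b) (f c)

theorem isMetric_dist (X : Type*) [MetricSpace X] : IsMetric (dist : X → X → ℝ) :=
  ⟨fun _ _ => dist_nonneg, fun _ _ => dist_eq_zero, dist_comm, fun x y z => dist_triangle x z y⟩

theorem IsMetric.isTriangleTriplet {X : Type*} {d : X → X → ℝ} (hd : IsMetric d) (x y z : X) :
    IsTriangleTriplet (d x y) (d x z) (d y z) := by
  obtain ⟨-, -, symm, triangle⟩ := hd
  refine ⟨?_, triangle x z y, ?_⟩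
  · simpa only [symm z y] using triangle x y z
  · simpa only [symm y x] using triangle y z x

namespace IsTriangleTriplet

variable {a b c : ℝ}

-- The points are the Fréchet embedding `p ↦ (d(p, x), d(p, y))` of the triangle into the plane
-- with the sup metric.
theorem exists_dist_eq (h : IsTriangleTriplet a b c) :
    ∃ x y z : ℝ × ℝ, dist x y = a ∧ dist x z = b ∧ dist y z = c := by
  obtain ⟨hab, hba, hca⟩ := h
  have ha : 0 ≤ a := by linarith
  have hb : 0 ≤ b := by linarith
  have hc : 0 ≤ c := by linarith
  have hac : |a - c| ≤ b := abs_sub_le_iff.2 ⟨by linarith, by linarith⟩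
  have hab' : |a - b| ≤ c := abs_sub_le_iff.2 ⟨by linarith, by linarith⟩
  refine ⟨(0, a), (a, 0), (b, c), ?_, ?_, ?_⟩
  · simp [Prod.dist_eq, abs_of_nonneg ha]
  · simpa [Prod.dist_eq, Real.dist_eq, abs_of_nonneg hb] using hac
  · simpa [Prod.dist_eq, Real.dist_eq, abs_of_nonneg hc] using hab'

theorem of_le_two_mul (ha : 0 ≤ a) (hab : a ≤ 2 * b) : IsTriangleTriplet a b b :=
  ⟨by linarith, by linarith, by linarith⟩

theorem abs_sub (ha : 0 ≤ a) (hb : 0 ≤ b) : IsTriangleTriplet a b |a - b| :=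
  ⟨by linarith [le_abs_self (a - b)], by linarith [neg_abs_le (a - b)],
    abs_sub_le_iff.2 ⟨by linarith, by linarith⟩⟩

end IsTriangleTriplet

namespace PreservesTriangleTriplets

variable {f : ℝ → ℝ}

theorem apply_le_two_mul (hf : PreservesTriangleTriplets f) {a b : ℝ} (ha : 0 ≤ a)
    (hab : a ≤ 2 * b) : f a ≤ 2 * f b := by
  simpa only [two_mul] using (hf (.of_le_two_mul ha hab)).1

theorem abs_apply_sub_apply_le (hf : PreservesTriangleTriplets f) {x y : ℝ} (hx : 0 ≤ x)
    (hy : 0 ≤ y) : |f x - f y| ≤ f |x - y| := by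
  obtain ⟨hxy, hyx, -⟩ := hf (.abs_sub hx hy)
  exact abs_sub_le_iff.2 ⟨sub_le_iff_le_add'.2 hxy, sub_le_iff_le_add'.2 hyx⟩

theorem uniformContinuousOn (hf : PreservesTriangleTriplets f)
    (hsmall : ∀ ε : ℝ, 0 < ε → ∃ x : ℝ, 0 < x ∧ f x < ε) : UniformContinuousOn f (Ici 0) := by
  rw [Metric.uniformContinuousOn_iff]
  intro ε hε
  obtain ⟨b, hb, hfb⟩ := hsmall (ε / 2) (half_pos hε)
  refine ⟨2 * b, by positivity, fun x hx y hy hxy => ?_⟩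
  calc dist (f x) (f y) ≤ f |x - y| := hf.abs_apply_sub_apply_le hx hy
    _ ≤ 2 * f b := hf.apply_le_two_mul (abs_nonneg _) hxy.le
    _ < ε := by linarith

end PreservesTriangleTriplets

namespace MetricPreserving

variable {f : ℝ → ℝ}

theorem preservesTriangleTriplets (hf : MetricPreserving f) : PreservesTriangleTriplets f := by
  intro a b c habc
  obtain ⟨x, y, z, rfl, rfl, rfl⟩ := habc.exists_dist_eq
  exact (hf (ℝ × ℝ) dist (isMetric_dist _)).isTriangleTriplet x y z

theorem apply_zero (hf : MetricPreserving f) : f 0 = 0 := by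
  simpa only [dist_self] using ((hf ℝ dist (isMetric_dist ℝ)).2.1 0 0).2 rfl

end MetricPreserving

theorem stmt19 (f : ℝ → ℝ) (hf : ∀ x, 0 ≤ x → 0 ≤ f x)
    (h : MetricPreserving f) :
    List.TFAE [ContinuousOn f (Set.Ici 0),
      ContinuousWithinAt f (Set.Ici 0) 0,
      ∀ ε : ℝ, 0 < ε → ∃ x : ℝ, 0 < x ∧ f x < ε,
      UniformContinuousOn f (Set.Ici 0)] := by
  tfae_have 1 → 2 := fun hcont => hcont 0 self_mem_Ici
  tfae_have 2 → 3 := fun hcont ε hε =>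
    exists_gt_apply_lt_of_continuousWithinAt_Ici hcont (h.apply_zero.trans_lt hε)
  tfae_have 3 → 4 := h.preservesTriangleTriplets.uniformContinuousOn
  tfae_have 4 → 1 := UniformContinuousOn.continuousOn
  tfae_finish
end
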